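/- Let n, t be integers with 2 ≤ t ≤ n−1. Suppose φ: 𝒢_n → 𝒢_n is a complete linear map satisfying: for all G ∈ 𝒢_n, α(φ(G)) = t if and only if α(G) = t. Then for any pairwise distinct i,j,k ∈ {1,...,n}, the edge set of φ(G_{ij}) ∪ φ(G_{ik}) consists of exactly two adjacent edges, i.e., two distinct edges that share a common vertex. -/

import Mathlib

/-- The independence number of a simple graph: the maximum cardinality of a set
of pairwise nonadjacent vertices. -/
noncomputable def indepNum {V : Type*} (G : SimpleGraph V) : ℕ :=
  sSup {k | ∃ s : Finset V, (∀ a ∈ s, ∀ b ∈ s, a ≠ b → ¬ G.Adj a b) ∧ s.card = k}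

/-- `G_{ij}`: the graph whose only edge is `(i, j)`. -/
def singleEdge {V : Type*} (i j : V) : SimpleGraph V :=
  SimpleGraph.fromEdgeSet {s(i, j)}

/-- A map on graphs is linear if it preserves unions. -/
def IsLinearMap' {V : Type*} (φ : SimpleGraph V → SimpleGraph V) : Prop :=
  ∀ G H : SimpleGraph V, φ (G ⊔ H) = φ G ⊔ φ H

/-- A complete linear map: a linear map sending the complete graph to itself. -/
def IsCompleteLinearMap {V : Type*} (φ : SimpleGraph V → SimpleGraph V) : Prop :=
  IsLinearMap' φ ∧ φ ⊤ = ⊤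

/-- A vertex permutation. -/
def IsVertexPermutation {V : Type*} (φ : SimpleGraph V → SimpleGraph V) : Prop :=
  ∃ σ : Equiv.Perm V, ∀ i j : V, i ≠ j → φ (singleEdge i j) = singleEdge (σ i) (σ j)

/-- An edge permutation. -/
def IsEdgePermutation {V : Type*} (φ : SimpleGraph V → SimpleGraph V) : Prop :=
  φ ⊤ = ⊤ ∧ ∀ i j : V, i ≠ j → ((φ (singleEdge i j)).edgeSet).ncard = 1

/-! Call vertex sets `T` and `T'` *corresponding* if `G` is independent on `T` exactly when `φ G` is
independent on `T'`. A linear map preserving `α = t` also preserves `α ≥ t` and `α ≥ t + 1`, and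
then, for `m = t` and `m = t + 1`, correspondence is a permutation of the `m`-sets: if `K` is the
graph of all edges not inside `T`, then any independent `m`-set of `φ K` corresponds to `T`.

If `S` and `S'` correspond and have `t + 1` elements, then the `t`-subsets of `S'` correspond to
`t`-subsets of `S`; comparing the deleted vertices gives a bijection `ρ` from `S'` to `S`. An edge
whose image contains `s(a, b)`, with `a` and `b` in `S'`, lies inside `S` and inside each `t`-subset
obtained by deleting `ρ c` for `c` other than `a` and `b`, so it is `s(ρ a, ρ b)`. Hence the images
of the single edges are nonempty and pairwise disjoint, and by counting each is a single edge; the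
inverse of `ρ` carries adjacent edges to adjacent edges. -/

variable {V : Type*} {G H : SimpleGraph V} {φ : SimpleGraph V → SimpleGraph V}

theorem exists_perm_of_leftTotal_of_leftUnique {α : Type*} [Finite α] {R : α → α → Prop}
    (htotal : Relator.LeftTotal R) (hunique : Relator.LeftUnique R) :
    ∃ σ : Equiv.Perm α, ∀ a b, R a b ↔ σ a = b := by
  choose f hf using htotal
  have hinj : Function.Injective f := fun a b hab => hunique (hf a) (hab ▸ hf b)
  refine ⟨Equiv.ofBijective f (Finite.injective_iff_bijective.1 hinj),
    fun a b => ⟨fun hab => ?_, ?_⟩⟩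
  · obtain ⟨c, rfl⟩ := Finite.surjective_of_injective hinj b
    exact congrArg f (hunique hab (hf c))
  · rintro rfl
    exact hf a

section IndependentSets

variable {s T : Set V} {x y : V}

theorem indepNum_eq (G : SimpleGraph V) : indepNum G = G.indepNum := by
  simp only [indepNum, SimpleGraph.indepNum, SimpleGraph.isNIndepSet_iff,
    SimpleGraph.isIndepSet_iff, Set.Pairwise, Finset.mem_coe]

theorem isIndepSet_of_le (hGH : G ≤ H) (hs : H.IsIndepSet s) : G.IsIndepSet s :=
  hs.mono' fun _ _ hnot hadj => hnot (hGH hadj)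

theorem isIndepSet_sup_iff : (G ⊔ H).IsIndepSet s ↔ G.IsIndepSet s ∧ H.IsIndepSet s := by
  refine ⟨fun h => ⟨isIndepSet_of_le le_sup_left h, isIndepSet_of_le le_sup_right h⟩, ?_⟩
  rintro ⟨hG, hH⟩ a ha b hb hab (hadj | hadj)
  exacts [hG ha hb hab hadj, hH ha hb hab hadj]

theorem isIndepSet_singleEdge_iff (hxy : x ≠ y) :
    (singleEdge x y).IsIndepSet T ↔ ¬(x ∈ T ∧ y ∈ T) := by
  refine ⟨fun h hT => h hT.1 hT.2 hxy (by simp [singleEdge, hxy]), fun h a ha b hb _ hadj => h ?_⟩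
  simp only [singleEdge, SimpleGraph.fromEdgeSet_adj, Set.mem_singleton_iff, Sym2.eq_iff] at hadj
  grind

theorem le_indepNum_iff [Finite V] {m : ℕ} :
    m ≤ G.indepNum ↔ ∃ T : Finset V, T.card = m ∧ G.IsIndepSet (T : Set V) := by
  constructor
  · intro hm
    obtain ⟨s, hs⟩ := G.exists_isNIndepSet_indepNum
    obtain ⟨T, hTs, hT⟩ := Finset.exists_subset_card_eq (hs.card_eq ▸ hm)
    exact ⟨T, hT, hs.isIndepSet.mono (Finset.coe_subset.2 hTs)⟩
  · rintro ⟨T, rfl, hT⟩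
    exact hT.card_le_indepNum

theorem indepNum_le_of_le [Finite V] (hGH : G ≤ H) : H.indepNum ≤ G.indepNum := by
  obtain ⟨T, hcard, hT⟩ := le_indepNum_iff.1 (le_refl H.indepNum)
  exact le_indepNum_iff.2 ⟨T, hcard, isIndepSet_of_le hGH hT⟩

/-- The complement of the clique on `T`: the largest graph in which `T` is independent. Graphs with
independence number exactly `T.card` are built by intersecting with it. -/
def cliqueCompl (T : Set V) : SimpleGraph V where
  Adj a b := a ≠ b ∧ ¬(a ∈ T ∧ b ∈ T)
  symm := ⟨fun _ _ h => ⟨h.1.symm, fun hT => h.2 hT.symm⟩⟩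
  loopless := ⟨fun _ h => h.1 rfl⟩

theorem le_cliqueCompl_iff : G ≤ cliqueCompl T ↔ G.IsIndepSet T :=
  ⟨fun h _ ha _ hb _ hadj => (h hadj).2 ⟨ha, hb⟩,
    fun h _ _ hadj => ⟨hadj.ne, fun hT => h hT.1 hT.2 hadj.ne hadj⟩⟩

theorem isIndepSet_cliqueCompl_self (T : Set V) : (cliqueCompl T).IsIndepSet T :=
  le_cliqueCompl_iff.1 le_rfl

theorem subset_of_isIndepSet_cliqueCompl (hs : s.Nontrivial) (h : (cliqueCompl T).IsIndepSet s) :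
    s ⊆ T := by
  intro a ha
  by_contra haT
  obtain ⟨b, hb, hba⟩ := hs.exists_ne a
  exact h ha hb hba.symm ⟨hba.symm, fun hT => haT hT.1⟩

theorem indepNum_inf_cliqueCompl [Finite V] {I T : Finset V} (hI : G.IsMaximumIndepSet I)
    (hIT : I ⊆ T) : (G ⊓ cliqueCompl T).indepNum = T.card := by
  classical
  refine le_antisymm ?_ (le_indepNum_iff.2
    ⟨T, rfl, isIndepSet_of_le inf_le_right (isIndepSet_cliqueCompl_self _)⟩)
  obtain ⟨U, hcard, hU⟩ := le_indepNum_iff.1 (le_refl (G ⊓ cliqueCompl T).indepNum)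
  have hindep : G.IsIndepSet (U \ (T \ I) : Finset V) := by
    intro a ha b hb hab hadj
    simp only [Finset.coe_sdiff, Set.mem_sdiff, Finset.mem_coe, not_and, not_not] at ha hb
    exact hU ha.1 hb.1 hab
      ⟨hadj, hab, fun hT => hI.isIndepSet (ha.2 hT.1) (hb.2 hT.2) hab hadj⟩
  have hle := hI.maximum _ hindep
  have hsplit := Finset.le_card_sdiff (T \ I) U
  have hsdiff := Finset.card_sdiff_add_card_eq_card hIT
  omega

theorem indepNum_cliqueCompl [Finite V] {T : Finset V} (hT : T.Nonempty) :
    (cliqueCompl (T : Set V)).indepNum = T.card := by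
  obtain ⟨x, hx⟩ := hT
  have hmax : (⊤ : SimpleGraph V).IsMaximumIndepSet {x} := by
    refine ⟨by simp, fun s hs => Finset.card_le_one.2 fun a ha b hb => ?_⟩
    by_contra hab
    exact hs ha hb hab hab
  simpa using indepNum_inf_cliqueCompl hmax (Finset.singleton_subset_iff.2 hx)

theorem exists_le_indepNum_eq [Finite V] {t : ℕ} (hG : G.indepNum ≤ t) (ht : t ≤ Nat.card V) :
    ∃ H ≤ G, H.indepNum = t := by
  cases nonempty_fintype V
  rw [Nat.card_eq_fintype_card] at ht
  obtain ⟨I, hI⟩ := G.maximumIndepSet_exists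
  obtain ⟨T, hIT, rfl⟩ :=
    Finset.exists_superset_card_eq ((G.maximumIndepSet_card_eq_indepNum I hI).trans_le hG) ht
  exact ⟨G ⊓ cliqueCompl T, inf_le_left, indepNum_inf_cliqueCompl hI hIT⟩

end IndependentSets

section Preservation

/-- `φ` preserves and reflects the existence of independent sets of size `m`. -/
def PreservesIndep (φ : SimpleGraph V → SimpleGraph V) (m : ℕ) : Prop :=
  ∀ G, m ≤ (φ G).indepNum ↔ m ≤ G.indepNum

theorem IsLinearMap'.monotone (hφ : IsLinearMap' φ) : Monotone φ := by
  intro G H hGH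
  rw [← sup_eq_right.2 hGH, hφ]
  exact le_sup_left

variable [Finite V] {t : ℕ}

theorem le_indepNum_map (hφ : Monotone φ) (ht : 1 ≤ t)
    (hpres : ∀ G, (φ G).indepNum = t ↔ G.indepNum = t) (hG : t ≤ G.indepNum) :
    t ≤ (φ G).indepNum := by
  obtain ⟨T, rfl, hT⟩ := le_indepNum_iff.1 hG
  rw [← (hpres (cliqueCompl T)).2 (indepNum_cliqueCompl (Finset.card_pos.1 ht))]
  exact indepNum_le_of_le (hφ (le_cliqueCompl_iff.2 hT))

theorem indepNum_map_le (hφ : Monotone φ) (ht : t ≤ Nat.card V)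
    (hpres : ∀ G, (φ G).indepNum = t ↔ G.indepNum = t) (hG : G.indepNum ≤ t) :
    (φ G).indepNum ≤ t := by
  obtain ⟨H, hHG, hH⟩ := exists_le_indepNum_eq hG ht
  exact (indepNum_le_of_le (hφ hHG)).trans ((hpres H).2 hH).le

theorem preservesIndep_of_indepNum_eq_iff (hφ : Monotone φ) (ht : 1 ≤ t) (htV : t ≤ Nat.card V)
    (hpres : ∀ G, (φ G).indepNum = t ↔ G.indepNum = t) :
    PreservesIndep φ t ∧ PreservesIndep φ (t + 1) := by
  have hiff (G) : (t ≤ (φ G).indepNum ↔ t ≤ G.indepNum) ∧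
      (t + 1 ≤ (φ G).indepNum ↔ t + 1 ≤ G.indepNum) := by
    have hlower := le_indepNum_map (G := G) hφ ht hpres
    have hupper := indepNum_map_le (G := G) hφ htV hpres
    have heq := hpres G
    omega
  exact ⟨fun G => (hiff G).1, fun G => (hiff G).2⟩

end Preservation

/-- `T` and `T'` correspond under `φ` if the graphs in which `T` is independent are exactly those
whose image has `T'` independent. A map induced by a vertex permutation `σ` matches `T` with its
image under `σ`, so this is how vertex data is recovered from `φ`. -/
def IndepCorrespond (φ : SimpleGraph V → SimpleGraph V) (T T' : Set V) : Prop :=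
  ∀ G, (φ G).IsIndepSet T' ↔ G.IsIndepSet T

namespace IndepCorrespond

variable {S S' T T' : Set V} {x y : V}

theorem subset (hS : IndepCorrespond φ S S') (hT : IndepCorrespond φ T T') (hST : S' ⊆ T')
    (hnontrivial : S.Nontrivial) : S ⊆ T :=
  subset_of_isIndepSet_cliqueCompl hnontrivial <|
    (hS _).1 (((hT _).2 (isIndepSet_cliqueCompl_self T)).mono hST)

theorem mem_and_mem_iff (hT : IndepCorrespond φ T T') (hxy : x ≠ y) :
    x ∈ T ∧ y ∈ T ↔ ∃ a ∈ T', ∃ b ∈ T', (φ (singleEdge x y)).Adj a b := by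
  rw [← not_iff_not, ← isIndepSet_singleEdge_iff hxy, ← hT]
  refine ⟨fun h ⟨a, ha, b, hb, hadj⟩ => h ha hb hadj.ne hadj, fun h a ha b hb _ hadj => ?_⟩
  exact h ⟨a, ha, b, hb, hadj⟩

end IndepCorrespond

section SetPermutation

variable [Finite V] {m : ℕ}

theorem exists_indepCorrespond (hφ : IsLinearMap' φ) (hm : 2 ≤ m) (hpres : PreservesIndep φ m)
    {T : Finset V} (hT : T.card = m) :
    ∃ T' : Finset V, T'.card = m ∧ IndepCorrespond φ T T' := by
  obtain ⟨T', hcard, hT'⟩ := le_indepNum_iff.1 <| (hpres (cliqueCompl T)).2 <|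
    le_indepNum_iff.2 ⟨T, hT, isIndepSet_cliqueCompl_self _⟩
  refine ⟨T', hcard, fun G => ⟨fun hG => ?_, fun hG => ?_⟩⟩
  · -- The image of `G ⊔ cliqueCompl T` is still independent on `T'`, so the join has an independent
    -- `m`-set, which can only be `T`.
    obtain ⟨U, hU, hUindep⟩ := le_indepNum_iff.1 <| (hpres (G ⊔ cliqueCompl T)).1 <|
      le_indepNum_iff.2 ⟨T', hcard, by rw [hφ]; exact isIndepSet_sup_iff.2 ⟨hG, hT'⟩⟩
    obtain ⟨hGU, hTU⟩ := isIndepSet_sup_iff.1 hUindep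
    have hUT : U ⊆ T := Finset.coe_subset.1 <|
      subset_of_isIndepSet_cliqueCompl (Finset.one_lt_card_iff_nontrivial.1 (by omega)) hTU
    rwa [Finset.eq_of_subset_of_card_le hUT (by omega)] at hGU
  · exact isIndepSet_of_le (hφ.monotone (le_cliqueCompl_iff.2 hG)) hT'

theorem exists_perm_indepCorrespond_iff (hφ : IsLinearMap' φ) (hm : 2 ≤ m)
    (hpres : PreservesIndep φ m) :
    ∃ σ : Equiv.Perm {T : Finset V // T.card = m},
      ∀ T T', IndepCorrespond φ (T.1 : Set V) T'.1 ↔ σ T = T' := by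
  refine exists_perm_of_leftTotal_of_leftUnique (fun T => ?_) fun S T T' hS hT => ?_
  · obtain ⟨T', hcard, hT'⟩ := exists_indepCorrespond hφ hm hpres T.2
    exact ⟨⟨T', hcard⟩, hT'⟩
  · have hnontrivial (U : {T : Finset V // T.card = m}) : (U.1 : Set V).Nontrivial :=
      Finset.one_lt_card_iff_nontrivial.1 (by have := U.2; omega)
    exact Subtype.ext <| Finset.coe_injective <|
      (hS.subset hT subset_rfl (hnontrivial S)).antisymm (hT.subset hS subset_rfl (hnontrivial T))

theorem exists_indepCorrespond_symm (hφ : IsLinearMap' φ) (hm : 2 ≤ m)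
    (hpres : PreservesIndep φ m) {T' : Finset V} (hT' : T'.card = m) :
    ∃ T : Finset V, T.card = m ∧ IndepCorrespond φ T T' := by
  obtain ⟨σ, hσ⟩ := exists_perm_indepCorrespond_iff hφ hm hpres
  exact ⟨_, (σ.symm ⟨T', hT'⟩).2, (hσ _ ⟨T', hT'⟩).2 (σ.apply_symm_apply _)⟩

theorem indepCorrespond_right_unique (hφ : IsLinearMap' φ) (hm : 2 ≤ m)
    (hpres : PreservesIndep φ m) {T T' U' : Finset V} (hT : T.card = m) (hT' : T'.card = m)
    (hU' : U'.card = m) (hTT' : IndepCorrespond φ T T') (hTU' : IndepCorrespond φ T U') :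
    T' = U' := by
  obtain ⟨σ, hσ⟩ := exists_perm_indepCorrespond_iff hφ hm hpres
  exact congrArg Subtype.val <|
    ((hσ ⟨T, hT⟩ ⟨T', hT'⟩).1 hTT').symm.trans ((hσ ⟨T, hT⟩ ⟨U', hU'⟩).1 hTU')

end SetPermutation

/-- `ρ` is a bijection from `S'` to `S` that is compatible with the correspondence of vertex sets,
both for the full sets and after deleting one vertex. It plays the role of the inverse of a vertex
permutation inducing `φ`, restricted to `S'`. -/
structure IndepMatching (φ : SimpleGraph V → SimpleGraph V) (ρ : V → V) (S S' : Set V) : Prop where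
  bijOn : Set.BijOn ρ S' S
  correspond : IndepCorrespond φ S S'
  correspond_diff : ∀ c ∈ S', IndepCorrespond φ (S \ {ρ c}) (S' \ {c})

namespace IndepMatching

variable {ρ : V → V} {S S' : Set V} {a b x y : V}

theorem eq_of_adj (h : IndepMatching φ ρ S S') (ha : a ∈ S') (hb : b ∈ S') (hxy : x ≠ y)
    (hadj : (φ (singleEdge x y)).Adj a b) : s(x, y) = s(ρ a, ρ b) := by
  have hxyS : x ∈ S ∧ y ∈ S := (h.correspond.mem_and_mem_iff hxy).2 ⟨a, ha, b, hb, hadj⟩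
  have havoid : ∀ c ∈ S', x = ρ c ∨ y = ρ c → c = a ∨ c = b := by
    intro c hc hcxy
    by_contra! hcab
    have hmem := ((h.correspond_diff c hc).mem_and_mem_iff hxy).2
      ⟨a, ⟨ha, hcab.1.symm⟩, b, ⟨hb, hcab.2.symm⟩, hadj⟩
    exact hcxy.elim hmem.1.2 hmem.2.2
  obtain ⟨c, hc, rfl⟩ := h.bijOn.surjOn hxyS.1
  obtain ⟨d, hd, rfl⟩ := h.bijOn.surjOn hxyS.2
  rcases havoid c hc (.inl rfl) with rfl | rfl <;> rcases havoid d hd (.inr rfl) with rfl | rfl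
  exacts [absurd rfl hxy, rfl, Sym2.eq_swap, absurd rfl hxy]

theorem map_adj (h : IndepMatching φ ρ S S') (ha : a ∈ S') (hb : b ∈ S') (hab : a ≠ b) :
    (φ (singleEdge (ρ a) (ρ b))).Adj a b := by
  have hne : ρ a ≠ ρ b := h.bijOn.injOn.ne ha hb hab
  obtain ⟨c, hc, d, hd, hadj⟩ := (h.correspond.mem_and_mem_iff hne).1
    ⟨h.bijOn.mapsTo ha, h.bijOn.mapsTo hb⟩
  rcases Sym2.eq_iff.1 (h.eq_of_adj hc hd hne hadj) with ⟨hac, hbd⟩ | ⟨had, hbc⟩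
  · obtain rfl := h.bijOn.injOn ha hc hac
    obtain rfl := h.bijOn.injOn hb hd hbd
    exact hadj
  · obtain rfl := h.bijOn.injOn ha hd had
    obtain rfl := h.bijOn.injOn hb hc hbc
    exact hadj.symm

end IndepMatching

section Matching

variable [Finite V] {t : ℕ}

theorem exists_indepCorrespond_erase [DecidableEq V] (hφ : IsLinearMap' φ) (ht : 2 ≤ t)
    (hpres : PreservesIndep φ t) {S S' : Finset V} (hS : S.card = t + 1) (hS' : S'.card = t + 1)
    (hSS' : IndepCorrespond φ S S') {c : V} (hc : c ∈ S') :
    ∃ r ∈ S, IndepCorrespond φ (S.erase r) (S'.erase c) := by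
  obtain ⟨T, hT, hcorr⟩ := exists_indepCorrespond_symm hφ ht hpres (T' := S'.erase c)
    (by rw [Finset.card_erase_of_mem hc, hS', Nat.add_sub_cancel])
  have hTS : T ⊆ S := Finset.coe_subset.1 <| hcorr.subset hSS'
    (Finset.coe_subset.2 (S'.erase_subset c)) (Finset.one_lt_card_iff_nontrivial.1 (by omega))
  obtain ⟨r, hrT, rfl⟩ := Finset.exists_eq_insert_iff.2 ⟨hTS, hT ▸ hS.symm⟩
  exact ⟨r, Finset.mem_insert_self r T, by rwa [Finset.erase_insert hrT]⟩

theorem exists_indepMatching (hφ : IsLinearMap' φ) (ht : 2 ≤ t) (hpres : PreservesIndep φ t)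
    {S S' : Finset V} (hS : S.card = t + 1) (hS' : S'.card = t + 1)
    (hSS' : IndepCorrespond φ S S') : ∃ ρ, IndepMatching φ ρ S S' := by
  classical
  choose! ρ hρS hρ using fun c (hc : c ∈ S') =>
    exists_indepCorrespond_erase hφ ht hpres hS hS' hSS' hc
  have hcard {U : Finset V} (hU : U.card = t + 1) {c : V} (hc : c ∈ U) : (U.erase c).card = t := by
    rw [Finset.card_erase_of_mem hc, hU, Nat.add_sub_cancel]
  have hinj : Set.InjOn ρ S' := fun a ha b hb hab =>
    S'.erase_injOn ha hb <| indepCorrespond_right_unique hφ ht hpres (hcard hS (hρS a ha))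
      (hcard hS' ha) (hcard hS' hb) (hρ a ha) (hab ▸ hρ b hb)
  have hsurj : Set.SurjOn ρ S' S :=
    Finset.surjOn_of_injOn_of_card_le ρ hρS hinj (hS.trans hS'.symm).le
  exact ⟨ρ, ⟨hρS, hinj, hsurj⟩, hSS', fun c hc => by simpa only [Finset.coe_erase] using hρ c hc⟩

end Matching

section Edges

variable [Finite V] {t : ℕ} {a b i j k x y : V} (hφ : IsLinearMap' φ) (ht : 2 ≤ t)
  (htV : t < Nat.card V) (hpres : PreservesIndep φ t) (hpres_succ : PreservesIndep φ (t + 1))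

include hφ ht htV hpres hpres_succ

theorem exists_indepMatching_source {U : Finset V} (hU : U.card ≤ t + 1) :
    ∃ S S' : Finset V, ∃ ρ, U ⊆ S ∧ IndepMatching φ ρ S S' := by
  cases nonempty_fintype V
  obtain ⟨S, hUS, hS⟩ :=
    Finset.exists_superset_card_eq hU (htV.trans_eq Nat.card_eq_fintype_card)
  obtain ⟨S', hS', hSS'⟩ := exists_indepCorrespond hφ (by omega) hpres_succ hS
  obtain ⟨ρ, hρ⟩ := exists_indepMatching hφ ht hpres hS hS' hSS'
  exact ⟨S, S', ρ, hUS, hρ⟩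

theorem exists_indepMatching_target {U : Finset V} (hU : U.card ≤ t + 1) :
    ∃ S S' : Finset V, ∃ ρ, U ⊆ S' ∧ IndepMatching φ ρ S S' := by
  cases nonempty_fintype V
  obtain ⟨S', hUS', hS'⟩ :=
    Finset.exists_superset_card_eq hU (htV.trans_eq Nat.card_eq_fintype_card)
  obtain ⟨S, hS, hSS'⟩ := exists_indepCorrespond_symm hφ (by omega) hpres_succ hS'
  obtain ⟨ρ, hρ⟩ := exists_indepMatching hφ ht hpres hS hS' hSS'
  exact ⟨S, S', ρ, hUS', hρ⟩

theorem exists_adj_adj_map_singleEdge (hij : i ≠ j) (hik : i ≠ k) (hjk : j ≠ k) :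
    ∃ a b c, b ≠ c ∧ (φ (singleEdge i j)).Adj a b ∧ (φ (singleEdge i k)).Adj a c := by
  classical
  obtain ⟨S, S', ρ, hUS, hρ⟩ := exists_indepMatching_source hφ ht htV hpres hpres_succ
    (U := {i, j, k}) (Finset.card_le_three.trans (by omega))
  simp only [Finset.insert_subset_iff, Finset.singleton_subset_iff] at hUS
  obtain ⟨a, ha, rfl⟩ := hρ.bijOn.surjOn hUS.1
  obtain ⟨b, hb, rfl⟩ := hρ.bijOn.surjOn hUS.2.1
  obtain ⟨c, hc, rfl⟩ := hρ.bijOn.surjOn hUS.2.2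
  exact ⟨a, b, c, ne_of_apply_ne ρ hjk, hρ.map_adj ha hb (ne_of_apply_ne ρ hij),
    hρ.map_adj ha hc (ne_of_apply_ne ρ hik)⟩

theorem exists_adj_map_singleEdge (hij : i ≠ j) : ∃ a b, (φ (singleEdge i j)).Adj a b := by
  have hcard : 3 ≤ ENat.card V := by
    rw [ENat.card_eq_coe_natCard]
    exact_mod_cast (by omega : 3 ≤ Nat.card V)
  obtain ⟨k, hki, hkj⟩ := ENat.exists_ne_ne_of_three_le hcard i j
  obtain ⟨a, b, -, -, hadj, -⟩ :=
    exists_adj_adj_map_singleEdge hφ ht htV hpres hpres_succ hij hki.symm hkj.symm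
  exact ⟨a, b, hadj⟩

theorem eq_of_adj_map_singleEdge (hij : i ≠ j) (hxy : x ≠ y)
    (hadj : (φ (singleEdge i j)).Adj a b) (hadj' : (φ (singleEdge x y)).Adj a b) :
    s(i, j) = s(x, y) := by
  classical
  obtain ⟨S, S', ρ, hUS', hρ⟩ := exists_indepMatching_target hφ ht htV hpres hpres_succ
    (U := {a, b}) (Finset.card_le_two.trans (by omega))
  simp only [Finset.insert_subset_iff, Finset.singleton_subset_iff] at hUS'
  exact (hρ.eq_of_adj hUS'.1 hUS'.2 hij hadj).trans (hρ.eq_of_adj hUS'.1 hUS'.2 hxy hadj').symm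

theorem exists_perm_mem_edgeSet_iff :
    ∃ σ : Equiv.Perm {e : Sym2 V // ¬e.IsDiag},
      ∀ e f, f.1 ∈ (φ (SimpleGraph.fromEdgeSet {e.1})).edgeSet ↔ σ e = f := by
  refine exists_perm_of_leftTotal_of_leftUnique ?_ ?_
  · rintro ⟨⟨i, j⟩, hij⟩
    obtain ⟨a, b, hadj⟩ := exists_adj_map_singleEdge hφ ht htV hpres hpres_succ hij
    exact ⟨⟨s(a, b), hadj.ne⟩, hadj⟩
  · rintro ⟨⟨i, j⟩, hij⟩ ⟨⟨x, y⟩, hxy⟩ ⟨⟨a, b⟩, _⟩ hadj hadj'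
    exact Subtype.ext (eq_of_adj_map_singleEdge hφ ht htV hpres hpres_succ hij hxy hadj hadj')

theorem edgeSet_map_singleEdge (hij : i ≠ j) (hadj : (φ (singleEdge i j)).Adj a b) :
    (φ (singleEdge i j)).edgeSet = {s(a, b)} := by
  obtain ⟨σ, hσ⟩ := exists_perm_mem_edgeSet_iff hφ ht htV hpres hpres_succ
  refine Set.eq_singleton_iff_unique_mem.2 ⟨hadj, fun f hf => ?_⟩
  have hσf := (hσ ⟨s(i, j), hij⟩ ⟨f, SimpleGraph.not_isDiag_of_mem_edgeSet _ hf⟩).1 hf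
  have hσab := (hσ ⟨s(i, j), hij⟩ ⟨s(a, b), hadj.ne⟩).1 hadj
  exact congrArg Subtype.val (hσf.symm.trans hσab)

end Edges

theorem stmt10_general [Finite V] {t : ℕ} (ht : 2 ≤ t) (htV : t < Nat.card V) (hφ : IsLinearMap' φ)
    (hpres : ∀ G, indepNum (φ G) = t ↔ indepNum G = t) :
    ∀ i j k : V, i ≠ j → i ≠ k → j ≠ k →
      ∃ e f : Sym2 V, e ≠ f ∧ (∃ v : V, v ∈ e ∧ v ∈ f) ∧
        (φ (singleEdge i j) ⊔ φ (singleEdge i k)).edgeSet = {e, f} := by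
  intro i j k hij hik hjk
  simp only [indepNum_eq] at hpres
  obtain ⟨hpres_self, hpres_succ⟩ :=
    preservesIndep_of_indepNum_eq_iff hφ.monotone (by omega) (by omega) hpres
  obtain ⟨a, b, c, hbc, hab, hac⟩ :=
    exists_adj_adj_map_singleEdge hφ ht htV hpres_self hpres_succ hij hik hjk
  refine ⟨s(a, b), s(a, c), mt Sym2.congr_right.1 hbc,
    ⟨a, Sym2.mem_mk_left a b, Sym2.mem_mk_left a c⟩, ?_⟩
  rw [SimpleGraph.edgeSet_sup, edgeSet_map_singleEdge hφ ht htV hpres_self hpres_succ hij hab,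
    edgeSet_map_singleEdge hφ ht htV hpres_self hpres_succ hik hac, Set.singleton_union]

theorem stmt10 (n t : ℕ) (ht : 2 ≤ t) (htn : t ≤ n - 1)
    (φ : SimpleGraph (Fin n) → SimpleGraph (Fin n)) (hφ : IsCompleteLinearMap φ)
    (hpres : ∀ G : SimpleGraph (Fin n), indepNum (φ G) = t ↔ indepNum G = t) :
    ∀ i j k : Fin n, i ≠ j → i ≠ k → j ≠ k →
      ∃ e f : Sym2 (Fin n), e ≠ f ∧ (∃ v : Fin n, v ∈ e ∧ v ∈ f) ∧
        (φ (singleEdge i j) ⊔ φ (singleEdge i k)).edgeSet = {e, f} := by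
  exact stmt10_general ht (by rw [Nat.card_fin]; omega) hφ.1 hpres
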